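/- Let n ≥ 2, p ∈ {1, …, n−1}, ω > 0, σ > 0, and let A ∈ 𝒮_n(ℝ) be positive definite with det(A) ≥ ω and σ_p(A) ≤ σ. Then there exist two positive numbers a₁ ≤ a₂ depending only on n, p, ω and σ such that, setting D = diag(a₁, a₂, …, a₂) ∈ 𝒮_n(ℝ): det(D) = ω, σ_p(D) = σ, A ≥ a₁ Id and D ≥ a₁ Id (in the sense of quadratic forms). -/

import Mathlib

/-!
Write `m = n - 1`. The proof rests on a weak form of Maclaurin's inequality: among nonnegative
numbers with a given product, the elementary symmetric functions are smallest when all the numbers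
are equal. It is AM-GM applied to the products over the `p`-element subsets.

Consider the curve `t ↦ diag(ω / t ^ m, t, …, t)` of matrices of determinant `ω`, which passes
through `t₀ • 1` where `t₀ ^ n = ω`. Averaging all the eigenvalues of an admissible `A` shows that
`σ_p ≤ σ` at `t₀`, while `σ_p ≥ t ^ p` on the curve. So there is a last parameter `a₂ ≥ t₀` with
`σ_p ≤ σ`, where `σ_p = σ` by continuity. Put `a₁ = ω / a₂ ^ m`, so that `a₁ ≤ a₂` as `a₂ ^ n ≥ ω`.

If an admissible matrix had an eigenvalue `μ < a₁`, replace its `m` other eigenvalues by their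
geometric mean `g`. Then `μ * g ^ m ≥ ω` forces `g > a₂`, and the point of the curve at `g` still
has `σ_p ≤ σ`, contradicting the choice of `a₂`. Taking the last parameter makes it unnecessary to
know whether `σ_p` is monotone along the curve.
-/

noncomputable section

/-- `σ_p(A)`: the `p`-th elementary symmetric function of the eigenvalues of the
symmetric matrix `A`, read off from its characteristic polynomial via
`det(X·1 + A) = Σ_p σ_p(A) X^{n-p}`, i.e. `σ_p(A) = (−1)^p coeff_{n−p}(charpoly A)`. -/
def sigmaP (n p : ℕ) (A : Matrix (Fin n) (Fin n) ℝ) : ℝ :=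
  (-1 : ℝ) ^ p * A.charpoly.coeff (n - p)

/-- The diagonal matrix `diag(a₁, a₂, …, a₂)`. -/
def diagD (n : ℕ) (a₁ a₂ : ℝ) : Matrix (Fin n) (Fin n) ℝ :=
  Matrix.diagonal (fun i => if (i : ℕ) = 0 then a₁ else a₂)

open Finset Filter Polynomial

section ElementarySymmetric

variable {ι : Type*}

lemma esymm_cons_succ {R : Type*} [CommSemiring R] (a : R) (s : Multiset R) (p : ℕ) :
    (a ::ₘ s).esymm (p + 1) = s.esymm (p + 1) + a * s.esymm p := by
  simp [Multiset.esymm, Multiset.powersetCard_cons, Multiset.sum_map_mul_left]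

lemma esymm_replicate {R : Type*} [CommSemiring R] (m p : ℕ) (c : R) :
    (Multiset.replicate m c).esymm p = m.choose p * c ^ p := by
  have prod_eq : ∀ t ∈ Multiset.powersetCard p (Multiset.replicate m c), t.prod = c ^ p := by
    intro t ht
    obtain ⟨hle, hcard⟩ := Multiset.mem_powersetCard.1 ht
    obtain ⟨k, -, rfl⟩ := Multiset.le_replicate_iff.1 hle
    rw [Multiset.card_replicate] at hcard
    rw [Multiset.prod_replicate, hcard]
  rw [Multiset.esymm, Multiset.map_congr rfl prod_eq]
  simp

lemma prod_powersetCard_succ_prod {M : Type*} [CommMonoid M] (s : Finset ι)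
    (p : ℕ) (f : ι → M) :
    ∏ t ∈ s.powersetCard (p + 1), ∏ i ∈ t, f i = (∏ i ∈ s, f i) ^ (#s - 1).choose p := by
  classical
  have card_containing : ∀ i ∈ s, #{t ∈ s.powersetCard (p + 1) | {i} ⊆ t} = (#s - 1).choose p :=
    fun i hi => by
      simpa using card_filter_powersetCard_subset {i} s (p + 1) (singleton_subset_iff.2 hi)
        (by simp)
  rw [prod_comm' (t' := s) (s' := fun i => {t ∈ s.powersetCard (p + 1) | {i} ⊆ t})
    (by grind), ← prod_pow]
  exact prod_congr rfl fun i hi => by rw [prod_const, card_containing i hi]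

lemma card_mul_le_sum_of_prod_eq_pow (s : Finset ι) {f : ι → ℝ} {g : ℝ}
    (hf : ∀ i ∈ s, 0 ≤ f i) (hg : 0 ≤ g) (hprod : ∏ i ∈ s, f i = g ^ #s) :
    #s * g ≤ ∑ i ∈ s, f i := by
  rcases s.eq_empty_or_nonempty with rfl | hs
  · simp
  have hcard : (0 : ℝ) < #s := by exact_mod_cast hs.card_pos
  have amgm := Real.geom_mean_le_arith_mean s 1 f (by simp) (by simpa using hcard) hf
  simp only [Pi.one_apply, Real.rpow_one, one_mul, sum_const, nsmul_eq_mul, mul_one, hprod,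
    Real.pow_rpow_inv_natCast hg hs.card_ne_zero] at amgm
  rwa [le_div_iff₀' hcard] at amgm

lemma choose_mul_pow_le_esymm_of_prod_eq_pow (s : Finset ι) (p : ℕ) {f : ι → ℝ} {g : ℝ}
    (hf : ∀ i ∈ s, 0 ≤ f i) (hg : 0 ≤ g) (hprod : ∏ i ∈ s, f i = g ^ #s) :
    (#s).choose p * g ^ p ≤ (s.val.map f).esymm p := by
  classical
  rw [esymm_map_val, ← card_powersetCard]
  refine card_mul_le_sum_of_prod_eq_pow _
    (fun t ht => prod_nonneg fun i hi => hf i ((mem_powersetCard.1 ht).1 hi)) (pow_nonneg hg p) ?_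
  rcases p with _ | p
  · simp
  have hcount : #s * (#s - 1).choose p = (p + 1) * (#s).choose (p + 1) := by
    rcases Nat.eq_zero_or_pos #s with h | h
    · simp [h]
    · simpa [Nat.sub_add_cancel h, mul_comm] using Nat.add_one_mul_choose_eq (#s - 1) p
  rw [prod_powersetCard_succ_prod, hprod, card_powersetCard, ← pow_mul, ← pow_mul, hcount]

end ElementarySymmetric

section LastSolution

variable {α β : Type*} [ConditionallyCompleteLinearOrder α] [TopologicalSpace α] [OrderTopology α]
  [DenselyOrdered α] [NoMaxOrder α] [LinearOrder β] [TopologicalSpace β] [OrderClosedTopology β]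

lemma exists_last_eq_of_le_of_eventually_lt {f : α → β} {t₀ : α} {c : β}
    (hf : ContinuousOn f (Set.Ici t₀)) (h₀ : f t₀ ≤ c) (hlarge : ∀ᶠ t in atTop, c < f t) :
    ∃ a, t₀ ≤ a ∧ f a = c ∧ ∀ t, a < t → c < f t := by
  have : Nonempty α := ⟨t₀⟩
  let S := Set.Ici t₀ ∩ f ⁻¹' Set.Iic c
  have hclosed : IsClosed S := hf.preimage_isClosed_of_isClosed isClosed_Ici isClosed_Iic
  obtain ⟨T, hT⟩ := eventually_atTop.1 hlarge
  have hbdd : BddAbove S := ⟨T, fun t ht => le_of_not_ge fun hTt => (hT t hTt).not_ge ht.2⟩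
  obtain ⟨ha, hfa⟩ : sSup S ∈ S := hclosed.csSup_mem ⟨t₀, le_rfl, h₀⟩ hbdd
  have hlast : ∀ t, sSup S < t → c < f t := fun t ht =>
    lt_of_not_ge fun hft => ht.not_ge (le_csSup hbdd ⟨ha.trans ht.le, hft⟩)
  refine ⟨sSup S, ha, ?_, hlast⟩
  obtain ⟨b, hb⟩ := exists_gt (sSup S)
  obtain ⟨t, ht, hft⟩ := intermediate_value_Icc hb.le
    (hf.mono fun x hx => ha.trans hx.1) ⟨hfa, (hlast b hb).le⟩
  rcases ht.1.eq_or_lt with heq | hlt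
  · rw [heq, hft]
  · exact absurd hft (hlast t hlt).ne'

end LastSolution

open scoped ComplexOrder MatrixOrder in
lemma posSemidef_sub_smul_one_iff_le_eigenvalues {ι 𝕜 : Type*} [Fintype ι] [DecidableEq ι]
    [RCLike 𝕜] {A : Matrix ι ι 𝕜} (hA : A.IsHermitian) (a : ℝ) :
    (A - a • (1 : Matrix ι ι 𝕜)).PosSemidef ↔ ∀ i, a ≤ hA.eigenvalues i := by
  rw [← Matrix.le_iff, ← Algebra.algebraMap_eq_smul_one,
    algebraMap_le_iff_le_spectrum (ha := hA.isSelfAdjoint),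
    hA.spectrum_real_eq_range_eigenvalues, Set.forall_mem_range]

lemma sigmaP_eq_esymm_of_charpoly_eq_prod {n p : ℕ} (hp : p ≤ n) {A : Matrix (Fin n) (Fin n) ℝ}
    {f : Fin n → ℝ} (hA : A.charpoly = ∏ i, (X - C (f i))) :
    sigmaP n p A = (univ.val.map f).esymm p := by
  have vieta := Multiset.prod_X_sub_C_coeff (univ.val.map f) (k := n - p) (by simp)
  rw [Multiset.map_map, Multiset.card_map, card_val, card_univ, Fintype.card_fin,
    Nat.sub_sub_self hp] at vieta
  have hcoeff : A.charpoly.coeff (n - p) = (-1) ^ p * (univ.val.map f).esymm p := hA ▸ vieta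
  rw [sigmaP, hcoeff, ← mul_assoc, ← mul_pow, neg_one_mul, neg_neg, one_pow, one_mul]

lemma sigmaP_eq_esymm_eigenvalues {n p : ℕ} (hp : p ≤ n) {A : Matrix (Fin n) (Fin n) ℝ}
    (hA : A.IsHermitian) : sigmaP n p A = (univ.val.map hA.eigenvalues).esymm p :=
  sigmaP_eq_esymm_of_charpoly_eq_prod hp hA.charpoly_eq

section DiagD

variable {m q : ℕ} {a₁ a₂ b₁ b₂ : ℝ}

lemma det_diagD_succ (m : ℕ) (a₁ a₂ : ℝ) : (diagD (m + 1) a₁ a₂).det = a₁ * a₂ ^ m := by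
  simp [diagD, Fin.prod_univ_succ]

lemma sigmaP_diagD_succ (hq : q ≤ m) (a₁ a₂ : ℝ) :
    sigmaP (m + 1) (q + 1) (diagD (m + 1) a₁ a₂) =
      m.choose (q + 1) * a₂ ^ (q + 1) + a₁ * (m.choose q * a₂ ^ q) := by
  have hentries : univ.val.map (fun i : Fin (m + 1) => if (i : ℕ) = 0 then a₁ else a₂) =
      a₁ ::ₘ Multiset.replicate m a₂ := by
    simp [Fin.univ_succ, Function.comp_def, ← Multiset.coe_replicate]
  rw [diagD, sigmaP_eq_esymm_of_charpoly_eq_prod (by lia) (Matrix.charpoly_diagonal _), hentries,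
    esymm_cons_succ, esymm_replicate, esymm_replicate]

lemma sigmaP_diagD_le_sigmaP_diagD (hq : q ≤ m) (ha₂ : 0 ≤ a₂) (hb₁ : 0 ≤ b₁) (h₁ : a₁ ≤ b₁)
    (h₂ : a₂ ≤ b₂) :
    sigmaP (m + 1) (q + 1) (diagD (m + 1) a₁ a₂) ≤
      sigmaP (m + 1) (q + 1) (diagD (m + 1) b₁ b₂) := by
  rw [sigmaP_diagD_succ hq, sigmaP_diagD_succ hq]
  gcongr

lemma pow_le_sigmaP_diagD (hq : q + 1 ≤ m) (ha₁ : 0 ≤ a₁) (ha₂ : 0 ≤ a₂) :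
    a₂ ^ (q + 1) ≤ sigmaP (m + 1) (q + 1) (diagD (m + 1) a₁ a₂) := by
  have hchoose : (1 : ℝ) ≤ m.choose (q + 1) := by exact_mod_cast Nat.choose_pos hq
  calc a₂ ^ (q + 1) ≤ m.choose (q + 1) * a₂ ^ (q + 1) :=
      le_mul_of_one_le_left (by positivity) hchoose
    _ ≤ m.choose (q + 1) * a₂ ^ (q + 1) + a₁ * (m.choose q * a₂ ^ q) :=
      le_add_of_nonneg_right (by positivity)
    _ = _ := (sigmaP_diagD_succ (by lia) a₁ a₂).symm

lemma posSemidef_diagD_sub_smul_one (n : ℕ) (h : a₁ ≤ a₂) :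
    (diagD n a₁ a₂ - a₁ • (1 : Matrix (Fin n) (Fin n) ℝ)).PosSemidef := by
  rw [diagD, Matrix.smul_one_eq_diagonal, Matrix.diagonal_sub, Matrix.posSemidef_diagonal_iff]
  intro i
  split_ifs <;> simp [h]

end DiagD

section Averaging

variable {m q : ℕ} {A : Matrix (Fin (m + 1)) (Fin (m + 1)) ℝ}

lemma exists_sigmaP_diagD_self_le (hq : q ≤ m) (hA : A.PosSemidef) :
    ∃ g, 0 ≤ g ∧ (diagD (m + 1) g g).det = A.det ∧
      sigmaP (m + 1) (q + 1) (diagD (m + 1) g g) ≤ sigmaP (m + 1) (q + 1) A := by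
  obtain ⟨g, hg, hpow⟩ : ∃ g : ℝ, 0 ≤ g ∧ g ^ (m + 1) = A.det :=
    ⟨_, Real.rpow_nonneg hA.det_nonneg _, Real.rpow_inv_natCast_pow hA.det_nonneg m.succ_ne_zero⟩
  refine ⟨g, hg, by rw [det_diagD_succ, ← pow_succ', hpow], ?_⟩
  have hprod : ∏ i, hA.1.eigenvalues i = g ^ #(univ : Finset (Fin (m + 1))) := by
    simp [hpow, hA.1.det_eq_prod_eigenvalues]
  calc sigmaP (m + 1) (q + 1) (diagD (m + 1) g g)
      = (#(univ : Finset (Fin (m + 1)))).choose (q + 1) * g ^ (q + 1) := by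
        rw [sigmaP_diagD_succ hq, card_univ, Fintype.card_fin, Nat.choose_succ_succ]
        push_cast
        ring
    _ ≤ (univ.val.map hA.1.eigenvalues).esymm (q + 1) :=
        choose_mul_pow_le_esymm_of_prod_eq_pow _ _ (fun i _ => hA.eigenvalues_nonneg i) hg hprod
    _ = sigmaP (m + 1) (q + 1) A := (sigmaP_eq_esymm_eigenvalues (by lia) hA.1).symm

lemma exists_sigmaP_diagD_eigenvalue_le (hm : m ≠ 0) (hq : q ≤ m) (hA : A.PosSemidef)
    (i : Fin (m + 1)) :
    ∃ g, 0 ≤ g ∧ (diagD (m + 1) (hA.1.eigenvalues i) g).det = A.det ∧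
      sigmaP (m + 1) (q + 1) (diagD (m + 1) (hA.1.eigenvalues i) g) ≤
        sigmaP (m + 1) (q + 1) A := by
  set eig := hA.1.eigenvalues
  have heig : ∀ j, 0 ≤ eig j := hA.eigenvalues_nonneg
  have hnonneg : 0 ≤ ∏ j ∈ univ.erase i, eig j := prod_nonneg fun j _ => heig j
  obtain ⟨g, hg, hpow⟩ : ∃ g : ℝ, 0 ≤ g ∧ g ^ m = ∏ j ∈ univ.erase i, eig j :=
    ⟨_, Real.rpow_nonneg hnonneg _, Real.rpow_inv_natCast_pow hnonneg hm⟩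
  have hcard : #(univ.erase i) = m := by simp
  have maclaurin (p : ℕ) : m.choose p * g ^ p ≤ ((univ.erase i).val.map eig).esymm p := by
    simpa only [hcard] using choose_mul_pow_le_esymm_of_prod_eq_pow (univ.erase i) p
      (fun j _ => heig j) hg (by rw [hcard, hpow])
  have hcons : univ.val.map eig = eig i ::ₘ (univ.erase i).val.map eig := by
    rw [← Multiset.map_cons, erase_val, Multiset.cons_erase (mem_univ_val i)]
  refine ⟨g, hg, ?_, ?_⟩
  · rw [det_diagD_succ, hpow, mul_prod_erase univ eig (mem_univ i)]
    simp [eig, hA.1.det_eq_prod_eigenvalues]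
  · rw [sigmaP_eq_esymm_eigenvalues (by lia) hA.1, hcons, esymm_cons_succ, sigmaP_diagD_succ hq]
    exact add_le_add (maclaurin _) (mul_le_mul_of_nonneg_left (maclaurin _) (heig i))

end Averaging

/-- The curve `t ↦ diag(ω / t ^ m, t, …, t)` of matrices of size `m + 1` and determinant `ω`, for
`t ≠ 0`. It parametrises the candidates for the extremal matrix `D` by their repeated entry. -/
def diagOfDet (m : ℕ) (ω t : ℝ) : Matrix (Fin (m + 1)) (Fin (m + 1)) ℝ :=
  diagD (m + 1) (ω / t ^ m) t

section DiagOfDet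

variable {m q : ℕ} {ω σ t t₀ : ℝ}

lemma det_diagOfDet (m : ℕ) (ω : ℝ) (ht : t ≠ 0) : (diagOfDet m ω t).det = ω := by
  rw [diagOfDet, det_diagD_succ, div_mul_cancel₀ _ (pow_ne_zero m ht)]

lemma diagOfDet_pow_succ (m : ℕ) (ht : t ≠ 0) :
    diagOfDet m (t ^ (m + 1)) t = diagD (m + 1) t t := by
  rw [diagOfDet, pow_succ', mul_div_cancel_right₀ _ (pow_ne_zero m ht)]

lemma continuousOn_sigmaP_diagOfDet (hq : q ≤ m) (ω : ℝ) :
    ContinuousOn (fun t => sigmaP (m + 1) (q + 1) (diagOfDet m ω t)) {0}ᶜ := by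
  simp only [diagOfDet, sigmaP_diagD_succ hq]
  have hpow : ∀ t ∈ ({0}ᶜ : Set ℝ), t ^ m ≠ 0 := fun t ht => pow_ne_zero m ht
  fun_prop (disch := assumption)

lemma tendsto_sigmaP_diagOfDet_atTop (hq : q + 1 ≤ m) (hω : 0 ≤ ω) :
    Tendsto (fun t => sigmaP (m + 1) (q + 1) (diagOfDet m ω t)) atTop atTop := by
  refine tendsto_atTop_mono' atTop ?_ (tendsto_pow_atTop q.succ_ne_zero)
  filter_upwards [eventually_ge_atTop 0] with t ht
  exact pow_le_sigmaP_diagD hq (by positivity) ht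

lemma exists_last_sigmaP_diagOfDet_eq (hq : q + 1 ≤ m) (hω : 0 ≤ ω) (ht₀ : 0 < t₀)
    (hle : sigmaP (m + 1) (q + 1) (diagOfDet m ω t₀) ≤ σ) :
    ∃ a, t₀ ≤ a ∧ sigmaP (m + 1) (q + 1) (diagOfDet m ω a) = σ ∧
      ∀ t, a < t → σ < sigmaP (m + 1) (q + 1) (diagOfDet m ω t) :=
  exists_last_eq_of_le_of_eventually_lt
    ((continuousOn_sigmaP_diagOfDet (by lia) ω).mono fun _ ht => (ht₀.trans_le ht).ne') hle
    ((tendsto_sigmaP_diagOfDet_atTop hq hω).eventually_gt_atTop σ)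

variable {A : Matrix (Fin (m + 1)) (Fin (m + 1)) ℝ}

lemma sigmaP_diagOfDet_pow_succ_le (hq : q ≤ m) (ht : 0 < t) (hA : A.PosSemidef)
    (hdet : t ^ (m + 1) ≤ A.det) :
    sigmaP (m + 1) (q + 1) (diagOfDet m (t ^ (m + 1)) t) ≤ sigmaP (m + 1) (q + 1) A := by
  obtain ⟨g, hg, hgdet, hgσ⟩ := exists_sigmaP_diagD_self_le hq hA
  have htg : t ≤ g := by
    rw [← hgdet, det_diagD_succ, ← pow_succ'] at hdet
    exact le_of_pow_le_pow_left₀ m.succ_ne_zero hg hdet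
  rw [diagOfDet_pow_succ m ht.ne']
  exact (sigmaP_diagD_le_sigmaP_diagD hq ht.le hg htg htg).trans hgσ

lemma div_pow_le_eigenvalues {a : ℝ} (hm : m ≠ 0) (hq : q ≤ m) (ha : 0 < a)
    (hlast : ∀ t, a < t → σ < sigmaP (m + 1) (q + 1) (diagOfDet m ω t)) (hA : A.PosSemidef)
    (hdet : ω ≤ A.det) (hσ : sigmaP (m + 1) (q + 1) A ≤ σ) (i : Fin (m + 1)) :
    ω / a ^ m ≤ hA.1.eigenvalues i := by
  by_contra! hlt
  obtain ⟨g, hg, hgdet, hgσ⟩ := exists_sigmaP_diagD_eigenvalue_le hm hq hA i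
  have heig : 0 ≤ hA.1.eigenvalues i := hA.eigenvalues_nonneg i
  have hω : ω ≤ hA.1.eigenvalues i * g ^ m := by rwa [← hgdet, det_diagD_succ] at hdet
  have hag : a < g := by
    rw [lt_div_iff₀ (by positivity)] at hlt
    exact lt_of_pow_lt_pow_left₀ m hg (lt_of_mul_lt_mul_left (hlt.trans_le hω) heig)
  have hfirst : ω / g ^ m ≤ hA.1.eigenvalues i :=
    (div_le_iff₀ (pow_pos (ha.trans hag) m)).2 hω
  refine lt_irrefl σ ?_
  calc σ < sigmaP (m + 1) (q + 1) (diagOfDet m ω g) := hlast g hag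
    _ ≤ sigmaP (m + 1) (q + 1) (diagD (m + 1) (hA.1.eigenvalues i) g) :=
      sigmaP_diagD_le_sigmaP_diagD hq hg heig hfirst le_rfl
    _ ≤ sigmaP (m + 1) (q + 1) A := hgσ
    _ ≤ σ := hσ

end DiagOfDet

/-- **Lemma (algebra).** Let `n ≥ 2`, `p ∈ {1,…,n−1}`, `ω, σ > 0`, and let `A` be a
positive definite symmetric matrix with `det A ≥ ω` and `σ_p(A) ≤ σ`. Then there are
`0 < a₁ ≤ a₂`, depending only on `n`, `p`, `ω`, `σ` (they serve simultaneously for all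
such `A`), such that `D = diag(a₁,a₂,…,a₂)` satisfies `det D = ω`, `σ_p(D) = σ`,
`A ≥ a₁·1` and `D ≥ a₁·1` in the sense of quadratic forms. -/
theorem algebra_lemma (n : ℕ) (hn : 2 ≤ n) (p : ℕ) (hp1 : 1 ≤ p) (hp2 : p ≤ n - 1)
    (ω σ : ℝ) (hω : 0 < ω) (hσ : 0 < σ)
    (A : Matrix (Fin n) (Fin n) ℝ) (hA : A.PosDef)
    (hdet : ω ≤ A.det) (hsig : sigmaP n p A ≤ σ) :
    ∃ a₁ a₂ : ℝ, 0 < a₁ ∧ a₁ ≤ a₂ ∧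
      (diagD n a₁ a₂).det = ω ∧
      sigmaP n p (diagD n a₁ a₂) = σ ∧
      (A - a₁ • (1 : Matrix (Fin n) (Fin n) ℝ)).PosSemidef ∧
      (diagD n a₁ a₂ - a₁ • (1 : Matrix (Fin n) (Fin n) ℝ)).PosSemidef ∧
      -- `a₁`, `a₂` depend only on `n`, `p`, `ω`, `σ`:
      ∀ A' : Matrix (Fin n) (Fin n) ℝ, A'.PosDef → ω ≤ A'.det → sigmaP n p A' ≤ σ →
        (A' - a₁ • (1 : Matrix (Fin n) (Fin n) ℝ)).PosSemidef := by
  obtain ⟨m, rfl⟩ : ∃ m, n = m + 1 := ⟨n - 1, by lia⟩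
  obtain ⟨q, rfl⟩ : ∃ q, p = q + 1 := ⟨p - 1, by lia⟩
  have hqm : q + 1 ≤ m := hp2
  obtain ⟨t₀, ht₀, rfl⟩ : ∃ t₀ : ℝ, 0 < t₀ ∧ t₀ ^ (m + 1) = ω :=
    ⟨_, Real.rpow_pos_of_pos hω _, Real.rpow_inv_natCast_pow hω.le m.succ_ne_zero⟩
  obtain ⟨a₂, hle, hσa₂, hlast⟩ := exists_last_sigmaP_diagOfDet_eq hqm hω.le ht₀
    ((sigmaP_diagOfDet_pow_succ_le (by lia) ht₀ hA.posSemidef hdet).trans hsig)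
  have ha₂ : 0 < a₂ := ht₀.trans_le hle
  have ha₁₂ : t₀ ^ (m + 1) / a₂ ^ m ≤ a₂ := by
    rw [div_le_iff₀ (by positivity), ← pow_succ']
    gcongr
  have hbound : ∀ B : Matrix (Fin (m + 1)) (Fin (m + 1)) ℝ, B.PosDef → t₀ ^ (m + 1) ≤ B.det →
      sigmaP (m + 1) (q + 1) B ≤ σ → (B - (t₀ ^ (m + 1) / a₂ ^ m) • 1).PosSemidef :=
    fun B hB hBdet hBσ => (posSemidef_sub_smul_one_iff_le_eigenvalues hB.1 _).2 <|
      div_pow_le_eigenvalues (by lia) (by lia) ha₂ hlast hB.posSemidef hBdet hBσ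
  exact ⟨t₀ ^ (m + 1) / a₂ ^ m, a₂, by positivity, ha₁₂, det_diagOfDet m _ ha₂.ne', hσa₂,
    hbound A hA hdet hsig, posSemidef_diagD_sub_smul_one _ ha₁₂, hbound⟩
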